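/- arXiv:2505.00292 — 10 statements merged into one kernel-verified Lean document; each statement's English description precedes it below -/
import Mathlib

section
/- Let X be a real-valued random variable with cumulative distribution function F_X, and let V ~ Unif(0,1) be independent of X. Define U = F_X(X^-) + V·(F_X(X) - F_X(X^-)), where F_X(x^-) = lim_{y↑x} F_X(y) denotes the left limit of F_X at x. Then U ~ Unif(0,1), i.e., P(U ≤ u) = u for every u ∈ [0,1]. -/
open MeasureTheory ProbabilityTheory

open Filter Topology in
/-- The quantile at level `u`. -/
lemma exists_quantile (f : StieltjesFunction ℝ) (h0 : Tendsto f atBot (𝓝 0))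
    (h1 : Tendsto f atTop (𝓝 1)) (u : ℝ) (hu0 : 0 < u) (hu1 : u < 1) :
    ∃ q, (∀ x < q, f x < u) ∧ u ≤ f q ∧ Function.leftLim f q ≤ u := by
  obtain ⟨b, hb⟩ := (h1.eventually (lt_mem_nhds hu1)).exists
  obtain ⟨a, ha⟩ := (h0.eventually (gt_mem_nhds hu0)).exists
  have hbdd : BddBelow {x | u ≤ f x} := by
    refine ⟨a, fun x hx => ?_⟩
    by_contra! h
    have := f.mono h.le
    have hx' : u ≤ f x := hx
    linarith
  have hne : {x | u ≤ f x}.Nonempty := ⟨b, hb.le⟩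
  have hlt : ∀ x < sInf {x | u ≤ f x}, f x < u := by
    intro x hx
    by_contra! h
    exact absurd (csInf_le hbdd h) (not_le.mpr hx)
  refine ⟨sInf {x | u ≤ f x}, hlt, ?_, ?_⟩
  · have hr := (f.right_continuous (sInf {x | u ≤ f x})).mono Set.Ioi_subset_Ici_self
    refine ge_of_tendsto hr ?_
    filter_upwards [self_mem_nhdsWithin] with y hy
    obtain ⟨z, hz, hzy⟩ := exists_lt_of_csInf_lt hne hy
    exact le_trans hz (f.mono hzy.le)
  · refine le_of_tendsto (f.mono.tendsto_leftLim _) ?_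
    filter_upwards [self_mem_nhdsWithin] with y hy
    exact (hlt y hy).le

/-- **Randomized probability integral transform.** If `X` is a real-valued random variable with
cdf `F`, and `V ~ Unif(0,1)` is independent of `X`, then
`U = F(X⁻) + V·(F(X) - F(X⁻))` is distributed as `Unif(0,1)`. -/
theorem randomized_pit
    {Ω : Type*} [MeasureSpace Ω] [IsProbabilityMeasure (ℙ : Measure Ω)]
    (X V : Ω → ℝ) (hX : Measurable X) (hV : Measurable V)
    (hVunif : Measure.map V ℙ = volume.restrict (Set.Icc (0 : ℝ) 1))
    (hindep : IndepFun X V ℙ)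
    (F : ℝ → ℝ) (hF : ∀ x, F x = (ℙ {ω | X ω ≤ x}).toReal)
    (U : Ω → ℝ)
    (hU : ∀ ω, U ω = Function.leftLim F (X ω)
      + V ω * (F (X ω) - Function.leftLim F (X ω))) :
    ∀ u ∈ Set.Icc (0 : ℝ) 1, ℙ {ω | U ω ≤ u} = ENNReal.ofReal u := by
  have hμ : IsProbabilityMeasure (Measure.map X ℙ) :=
    Measure.isProbabilityMeasure_map hX.aemeasurable
  obtain ⟨f, hf⟩ : ∃ f, f = cdf (Measure.map X ℙ) := ⟨_, rfl⟩
  have hFf : F = f := by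
    funext x
    rw [hF, hf, cdf_eq_real, measureReal_def, Measure.map_apply hX measurableSet_Iic]
    rfl
  have hmeas : f.measure = Measure.map X ℙ := by rw [hf, measure_cdf]
  have h0 : Filter.Tendsto f Filter.atBot (nhds 0) := by rw [hf]; exact tendsto_cdf_atBot _
  have h1 : Filter.Tendsto f Filter.atTop (nhds 1) := by rw [hf]; exact tendsto_cdf_atTop _
  have hf0 : ∀ x, 0 ≤ f x := by rw [hf]; exact cdf_nonneg _
  subst hFf
  have hV01 : ∀ᵐ ω, V ω ∈ Set.Icc (0 : ℝ) 1 := by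
    have : ∀ᵐ v ∂(Measure.map V ℙ), v ∈ Set.Icc (0 : ℝ) 1 := by
      rw [hVunif]; exact ae_restrict_mem measurableSet_Icc
    exact ae_of_ae_map hV.aemeasurable this
  have hVc : ∀ c, 0 ≤ c → c ≤ 1 → ℙ (V ⁻¹' Set.Iic c) = ENNReal.ofReal c := by
    intro c hc0 hc1
    rw [← Measure.map_apply hV measurableSet_Iic, hVunif, Measure.restrict_apply measurableSet_Iic]
    have : Set.Iic c ∩ Set.Icc (0:ℝ) 1 = Set.Icc 0 c := by
      ext x; simp only [Set.mem_inter_iff, Set.mem_Iic, Set.mem_Icc]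
      constructor
      · rintro ⟨a, b, _⟩; exact ⟨b, a⟩
      · rintro ⟨a, b⟩; exact ⟨b, a, b.trans hc1⟩
    rw [this, Real.volume_Icc, sub_zero]
  have key : ∀ u, 0 < u → u < 1 → ∃ A : Set Ω, ℙ A = ENNReal.ofReal u ∧
      (∀ ω, V ω ∈ Set.Icc (0:ℝ) 1 → ω ∈ A → U ω ≤ u) ∧
      (∀ ω, V ω ∈ Set.Icc (0:ℝ) 1 → U ω < u → ω ∈ A) := by
    intro u hu0 hu1
    obtain ⟨q, hq1, hq2, hq3⟩ := exists_quantile f h0 h1 u hu0 hu1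
    set a := Function.leftLim f q with ha
    have haf : a ≤ f q := f.mono.leftLim_le le_rfl
    have ha0 : 0 ≤ a := (hf0 (q - 1)).trans (f.mono.le_leftLim (by linarith))
    obtain ⟨c, hc0, hc1, hc⟩ : ∃ c, 0 ≤ c ∧ c ≤ 1 ∧ c * (f q - a) = u - a := by
      rcases haf.eq_or_lt with h | h
      · exact ⟨0, le_rfl, zero_le_one, by linarith⟩
      · have hp : 0 < f q - a := by linarith
        exact ⟨(u - a) / (f q - a), div_nonneg (by linarith) hp.le,
          (div_le_one hp).2 (by linarith), div_mul_cancel₀ _ hp.ne'⟩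
    refine ⟨X ⁻¹' Set.Iio q ∪ (X ⁻¹' {q} ∩ V ⁻¹' {v | v * (f q - a) ≤ u - a}), ?_, ?_, ?_⟩
    · have hms : MeasurableSet {v : ℝ | v * (f q - a) ≤ u - a} :=
        measurableSet_le (by fun_prop) measurable_const
      rw [measure_union _ ((hX (measurableSet_singleton q)).inter (hV hms)),
        hindep.measure_inter_preimage_eq_mul _ _ (measurableSet_singleton q) hms,
        ← Measure.map_apply hX measurableSet_Iio, 
        ← Measure.map_apply hX (measurableSet_singleton q), ← hmeas,
        StieltjesFunction.measure_singleton, StieltjesFunction.measure_Iio f h0, ← ha, sub_zero]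
      · rcases haf.eq_or_lt with h | h
        · have : u = a := by linarith
          rw [← h, this]; simp
        · have : {v : ℝ | v * (f q - a) ≤ u - a} = Set.Iic c := by
            ext v
            rw [← hc]
            exact mul_le_mul_iff_left₀ (sub_pos.2 h)
          rw [this, hVc c hc0 hc1, ← ENNReal.ofReal_mul (by linarith),
            ← ENNReal.ofReal_add ha0 (mul_nonneg (by linarith) hc0), mul_comm, hc]
          congr 1; ring
      · rw [Set.disjoint_left]
        rintro ω h ⟨h', -⟩
        simp only [Set.mem_preimage, Set.mem_Iio, Set.mem_singleton_iff] at h h'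
        exact h.ne h'
    · rintro ω ⟨hv0, hv1⟩ (h | ⟨h, h'⟩)
      · have h3 := hq1 _ h
        have h4 : Function.leftLim f (X ω) ≤ f (X ω) := f.mono.leftLim_le le_rfl
        rw [hU]; nlinarith
      · have h2 : X ω = q := h
        have h3 : V ω * (f q - a) ≤ u - a := h'
        rw [hU, h2]; linarith
    · rintro ω ⟨hv0, hv1⟩ h
      rw [hU] at h
      rcases lt_trichotomy (X ω) q with h2 | h2 | h2
      · exact Or.inl h2
      · refine Or.inr ⟨h2, ?_⟩
        rw [h2] at h
        show V ω * (f q - a) ≤ u - a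
        linarith
      · have h3 : f q ≤ Function.leftLim f (X ω) := f.mono.le_leftLim h2
        have h4 : Function.leftLim f (X ω) ≤ f (X ω) := f.mono.leftLim_le le_rfl
        nlinarith
  rintro u ⟨hu0, hu1⟩
  have hlow : ∀ w, 0 < w → w < 1 → w ≤ u → ENNReal.ofReal w ≤ ℙ {ω | U ω ≤ u} := by
    intro w h0 h1 hw
    obtain ⟨A, hA, hA1, -⟩ := key w h0 h1
    rw [← hA]
    apply measure_mono_ae
    filter_upwards [hV01] with ω hω h
    exact (hA1 ω hω h).trans hw
  have hup : ∀ w, 0 < w → w < 1 → u < w → ℙ {ω | U ω ≤ u} ≤ ENNReal.ofReal w := by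
    intro w h0 h1 hw
    obtain ⟨A, hA, -, hA1⟩ := key w h0 h1
    rw [← hA]
    apply measure_mono_ae
    filter_upwards [hV01] with ω hω h
    exact hA1 ω hω (lt_of_le_of_lt h hw)
  have hr : ℙ {ω | U ω ≤ u} = ENNReal.ofReal (ℙ {ω | U ω ≤ u}).toReal :=
    (ENNReal.ofReal_toReal (measure_ne_top _ _)).symm
  have hr0 : 0 ≤ (ℙ {ω | U ω ≤ u}).toReal := ENNReal.toReal_nonneg
  have hr1 : (ℙ {ω | U ω ≤ u}).toReal ≤ 1 := by
    have := ENNReal.toReal_mono ENNReal.one_ne_top (prob_le_one (μ := ℙ) (s := {ω | U ω ≤ u}))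
    simpa using this
  rw [hr] at hlow hup ⊢
  congr 1
  set r := (ℙ {ω | U ω ≤ u}).toReal
  apply le_antisymm
  · by_contra! h
    have := (ENNReal.ofReal_le_ofReal_iff (by linarith)).1
      (hup ((u + r) / 2) (by linarith) (by linarith) (by linarith))
    linarith
  · by_contra! h
    have := (ENNReal.ofReal_le_ofReal_iff hr0).1
      (hlow ((u + r) / 2) (by linarith) (by linarith) (by linarith))
    linarith
end

section
/- Let X be a real-valued random variable with cumulative distribution function F_X, let V ~ Unif(0,1) be independent of X, and define U = F_X(X^-) + V·(F_X(X) - F_X(X^-)). Fix u ∈ (0,1) and let F_X^{-1}(u) = inf{z ∈ ℝ : F_X(z) ≥ u}. Then P(U ≤ u and X < F_X^{-1}(u)) = F_X(F_X^{-1}(u)^-), the left limit of F_X at the point F_X^{-1}(u). -/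
open MeasureTheory ProbabilityTheory

/-- First term in the decomposition of the randomized probability integral transform:
`P(U ≤ u, X < F⁻¹(u)) = F(F⁻¹(u)⁻)`, the left limit of the cdf at the quantile. -/
theorem randomized_pit_below_quantile
    {Ω : Type*} [MeasureSpace Ω] [IsProbabilityMeasure (ℙ : Measure Ω)]
    (X V : Ω → ℝ) (hX : Measurable X) (hV : Measurable V)
    (hVunif : Measure.map V ℙ = volume.restrict (Set.Icc (0 : ℝ) 1))
    (hindep : IndepFun X V ℙ)
    (F : ℝ → ℝ) (hF : ∀ x, F x = (ℙ {ω | X ω ≤ x}).toReal)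
    (U : Ω → ℝ)
    (hU : ∀ ω, U ω = Function.leftLim F (X ω)
      + V ω * (F (X ω) - Function.leftLim F (X ω)))
    (u : ℝ) (hu : u ∈ Set.Ioo (0 : ℝ) 1)
    (Finv : ℝ) (hFinv : Finv = sInf {z : ℝ | u ≤ F z}) :
    ℙ {ω | U ω ≤ u ∧ X ω < Finv} = ENNReal.ofReal (Function.leftLim F Finv) := by
  have : IsProbabilityMeasure (Measure.map X ℙ) :=
    Measure.isProbabilityMeasure_map hX.aemeasurable
  have hFc : F = cdf (Measure.map X ℙ) := by
    funext x
    rw [hF, cdf_eq_real, measureReal_def, Measure.map_apply hX measurableSet_Iic]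
    rfl
  have hmono : Monotone F := hFc ▸ monotone_cdf _
  have hbdd : BddBelow {z : ℝ | u ≤ F z} := by
    have ht : Filter.Tendsto F Filter.atBot (nhds 0) := hFc ▸ tendsto_cdf_atBot _
    obtain ⟨a, ha⟩ := (ht.eventually (gt_mem_nhds hu.1)).exists
    refine ⟨a, fun z hz => ?_⟩
    by_contra h
    have h1 := hmono (not_le.mp h).le
    have h2 : u ≤ F z := hz
    linarith
  have hV1 : ∀ᵐ ω ∂(ℙ : Measure Ω), V ω ∈ Set.Icc (0 : ℝ) 1 := by
    have h : ∀ᵐ v ∂(Measure.map V ℙ), v ∈ Set.Icc (0 : ℝ) 1 := by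
      rw [hVunif]
      exact ae_restrict_mem measurableSet_Icc
    exact ae_of_ae_map hV.aemeasurable h
  have hae : ({ω | U ω ≤ u ∧ X ω < Finv} : Set Ω) =ᵐ[ℙ] (X ⁻¹' Set.Iio Finv : Set Ω) := by
    filter_upwards [hV1] with ω hω
    apply propext
    change (U ω ≤ u ∧ X ω < Finv) ↔ X ω < Finv
    refine ⟨fun h => h.2, fun h => ⟨?_, h⟩⟩
    have h1 : F (X ω) < u := by
      by_contra hc
      have := csInf_le hbdd (show X ω ∈ {z : ℝ | u ≤ F z} from not_lt.mp hc)
      linarith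
    have h2 : Function.leftLim F (X ω) ≤ F (X ω) := hmono.leftLim_le le_rfl
    rw [hU]
    nlinarith [hω.2]
  rw [measure_congr hae, ← Measure.map_apply hX measurableSet_Iio]
  conv_lhs => rw [← measure_cdf (Measure.map X ℙ)]
  rw [StieltjesFunction.measure_Iio _ (tendsto_cdf_atBot _), sub_zero, hFc]
end

section
/- Let X be a real-valued random variable with cumulative distribution function F_X, let V ~ Unif(0,1) be independent of X, and define U = F_X(X^-) + V·(F_X(X) - F_X(X^-)). Fix u ∈ (0,1) and let F_X^{-1}(u) = inf{z ∈ ℝ : F_X(z) ≥ u}. Then P(U ≤ u and X = F_X^{-1}(u)) = u - F_X(F_X^{-1}(u)^-). -/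
open MeasureTheory ProbabilityTheory

/-- Second term in the decomposition of the randomized probability integral transform:
`P(U ≤ u, X = F⁻¹(u)) = u - F(F⁻¹(u)⁻)`. -/
theorem randomized_pit_at_quantile
    {Ω : Type*} [MeasureSpace Ω] [IsProbabilityMeasure (ℙ : Measure Ω)]
    (X V : Ω → ℝ) (hX : Measurable X) (hV : Measurable V)
    (hVunif : Measure.map V ℙ = volume.restrict (Set.Icc (0 : ℝ) 1))
    (hindep : IndepFun X V ℙ)
    (F : ℝ → ℝ) (hF : ∀ x, F x = (ℙ {ω | X ω ≤ x}).toReal)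
    (U : Ω → ℝ)
    (hU : ∀ ω, U ω = Function.leftLim F (X ω)
      + V ω * (F (X ω) - Function.leftLim F (X ω)))
    (u : ℝ) (hu : u ∈ Set.Ioo (0 : ℝ) 1)
    (Finv : ℝ) (hFinv : Finv = sInf {z : ℝ | u ≤ F z}) :
    ℙ {ω | U ω ≤ u ∧ X ω = Finv} = ENNReal.ofReal (u - Function.leftLim F Finv) := by
  have hprob : IsProbabilityMeasure (Measure.map X ℙ) :=
    Measure.isProbabilityMeasure_map hX.aemeasurable
  have hFc : F = cdf (Measure.map X ℙ) := by
    funext x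
    rw [hF, cdf_eq_real, measureReal_def, Measure.map_apply hX measurableSet_Iic]
    rfl
  have hmono : Monotone F := by rw [hFc]; exact monotone_cdf _
  obtain ⟨hu0, hu1⟩ := hu
  have hne : {z : ℝ | u ≤ F z}.Nonempty := by
    have h := tendsto_cdf_atTop (Measure.map X ℙ)
    rw [← hFc] at h
    obtain ⟨z, hz⟩ := (h.eventually (lt_mem_nhds hu1)).exists
    exact ⟨z, hz.le⟩
  have hbdd : BddBelow {z : ℝ | u ≤ F z} := by
    have h := tendsto_cdf_atBot (Measure.map X ℙ)
    rw [← hFc] at h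
    obtain ⟨z, hz⟩ := (h.eventually (gt_mem_nhds hu0)).exists
    refine ⟨z, fun w hw => ?_⟩
    by_contra! hlt
    have h1 := hmono hlt.le
    have h2 : u ≤ F w := hw
    linarith
  have huF : u ≤ F Finv := by
    have hc : ContinuousWithinAt F (Set.Ici Finv) Finv := by
      rw [hFc]; exact (cdf _).right_continuous Finv
    have ht : Filter.Tendsto F (nhdsWithin Finv (Set.Ioi Finv)) (nhds (F Finv)) :=
      hc.mono_left (nhdsWithin_mono _ Set.Ioi_subset_Ici_self)
    refine ge_of_tendsto ht ?_
    filter_upwards [self_mem_nhdsWithin] with z hz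
    have hz' : sInf {z : ℝ | u ≤ F z} < z := hFinv ▸ hz
    obtain ⟨w, hw, hwz⟩ := exists_lt_of_csInf_lt hne hz'
    exact le_trans hw (hmono hwz.le)
  have hLu : Function.leftLim F Finv ≤ u := by
    refine le_of_tendsto (hmono.tendsto_leftLim Finv) ?_
    filter_upwards [self_mem_nhdsWithin] with z hz
    by_contra! hlt
    have h1 : sInf {z : ℝ | u ≤ F z} ≤ z := csInf_le hbdd hlt.le
    rw [← hFinv] at h1
    exact absurd hz (not_lt.mpr h1)
  have hsing : ℙ (X ⁻¹' {Finv}) = ENNReal.ofReal (F Finv - Function.leftLim F Finv) := by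
    rw [← Measure.map_apply hX (measurableSet_singleton _)]
    conv_lhs => rw [← measure_cdf (Measure.map X ℙ)]
    rw [StieltjesFunction.measure_singleton, hFc]
  have hset : {ω | U ω ≤ u ∧ X ω = Finv} =
      X ⁻¹' {Finv} ∩ V ⁻¹' {v | Function.leftLim F Finv + v * (F Finv - Function.leftLim F Finv) ≤ u} := by
    ext ω
    simp only [Set.mem_setOf_eq, Set.mem_inter_iff, Set.mem_preimage, Set.mem_singleton_iff]
    constructor
    · rintro ⟨h1, h2⟩
      rw [hU, h2] at h1
      exact ⟨h2, h1⟩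
    · rintro ⟨h2, h1⟩
      refine ⟨?_, h2⟩
      rw [hU, h2]
      exact h1
  generalize Function.leftLim F Finv = L at hLu hsing hset ⊢
  have hmeas : MeasurableSet {v : ℝ | L + v * (F Finv - L) ≤ u} :=
    measurableSet_le (by fun_prop) (by fun_prop)
  rw [hset, hindep.measure_inter_preimage_eq_mul _ _ (measurableSet_singleton _) hmeas, hsing]
  rcases eq_or_lt_of_le (hLu.trans huF) with h | h
  · rw [← h, sub_self, ENNReal.ofReal_zero, zero_mul, ENNReal.ofReal_of_nonpos]
    linarith
  · have hd : 0 < F Finv - L := sub_pos.mpr h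
    have hs : {v : ℝ | L + v * (F Finv - L) ≤ u} ∩ Set.Icc 0 1
        = Set.Icc 0 ((u - L) / (F Finv - L)) := by
      have hc1 : (u - L) / (F Finv - L) ≤ 1 := by rw [div_le_one hd]; linarith
      ext v
      simp only [Set.mem_inter_iff, Set.mem_setOf_eq, Set.mem_Icc]
      have : L + v * (F Finv - L) ≤ u ↔ v ≤ (u - L) / (F Finv - L) := by
        rw [le_div_iff₀ hd]; constructor <;> intro _ <;> linarith
      rw [this]
      constructor
      · rintro ⟨h1, h2, _⟩; exact ⟨h2, h1⟩
      · rintro ⟨h1, h2⟩; exact ⟨h2, h1, h2.trans hc1⟩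
    rw [← Measure.map_apply hV hmeas, hVunif, Measure.restrict_apply hmeas, hs, Real.volume_Icc,
      sub_zero, ← ENNReal.ofReal_mul hd.le, mul_div_cancel₀ _ hd.ne']
end

section
/- Let X be a real-valued random variable with cumulative distribution function F_X, let V ~ Unif(0,1) be independent of X, and define U = F_X(X^-) + V·(F_X(X) - F_X(X^-)). Fix u ∈ (0,1) and let F_X^{-1}(u) = inf{z ∈ ℝ : F_X(z) ≥ u}. Then P(U ≤ u and X > F_X^{-1}(u)) = 0. -/
open MeasureTheory ProbabilityTheory

/-- Third term in the decomposition of the randomized probability integral transform: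
`P(U ≤ u, X > F⁻¹(u)) = 0`. -/
theorem randomized_pit_above_quantile
    {Ω : Type*} [MeasureSpace Ω] [IsProbabilityMeasure (ℙ : Measure Ω)]
    (X V : Ω → ℝ) (hX : Measurable X) (hV : Measurable V)
    (hVunif : Measure.map V ℙ = volume.restrict (Set.Icc (0 : ℝ) 1))
    (hindep : IndepFun X V ℙ)
    (F : ℝ → ℝ) (hF : ∀ x, F x = (ℙ {ω | X ω ≤ x}).toReal)
    (U : Ω → ℝ)
    (hU : ∀ ω, U ω = Function.leftLim F (X ω)
      + V ω * (F (X ω) - Function.leftLim F (X ω)))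
    (u : ℝ) (hu : u ∈ Set.Ioo (0 : ℝ) 1)
    (Finv : ℝ) (hFinv : Finv = sInf {z : ℝ | u ≤ F z}) :
    ℙ {ω | U ω ≤ u ∧ Finv < X ω} = 0 := by
  set μ : Measure ℝ := Measure.map X ℙ with hμ
  haveI : IsProbabilityMeasure μ := Measure.isProbabilityMeasure_map hX.aemeasurable
  have hFc : F = cdf μ := by
    funext x
    rw [hF, cdf_eq_real, Measure.real, hμ, Measure.map_apply hX measurableSet_Iic]
    rfl
  have hmono : Monotone F := hFc ▸ monotone_cdf μ
  have hne : {z : ℝ | u ≤ F z}.Nonempty := by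
    have h := tendsto_cdf_atTop μ
    rw [← hFc] at h
    obtain ⟨z, hz⟩ := (h.eventually (lt_mem_nhds hu.2)).exists
    exact ⟨z, hz.le⟩
  have habove : ∀ y, Finv < y → u ≤ F y := by
    intro y hy
    rw [hFinv] at hy
    obtain ⟨z, hz, hzy⟩ := exists_lt_of_csInf_lt hne hy
    exact le_trans hz (hmono hzy.le)
  have hq : u ≤ F Finv := by
    have hc : ContinuousWithinAt F (Set.Ioi Finv) Finv := by
      rw [hFc]
      exact ((cdf μ).right_continuous Finv).mono Set.Ioi_subset_Ici_self
    refine ge_of_tendsto hc ?_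
    filter_upwards [self_mem_nhdsWithin] with y hy using habove y hy
  have hIoc : ∀ x, F x ≤ u → μ (Set.Ioc Finv x) = 0 := by
    intro x hx
    rw [← measure_cdf μ, StieltjesFunction.measure_Ioc, ← hFc, ENNReal.ofReal_eq_zero]
    linarith
  have hA : μ {x | Finv < x ∧ F x ≤ u} = 0 := by
    apply measure_null_of_locally_null
    rintro x ⟨hx1, hx2⟩
    by_cases hm : ∃ y, x < y ∧ F y ≤ u
    · obtain ⟨y, hxy, hy⟩ := hm
      exact ⟨Set.Ioc Finv y, mem_nhdsWithin_of_mem_nhds (Ioc_mem_nhds hx1 hxy), hIoc y hy⟩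
    · push Not at hm
      refine ⟨Set.Ioc Finv x, ?_, hIoc x hx2⟩
      filter_upwards [self_mem_nhdsWithin] with y hy
      refine ⟨hy.1, ?_⟩
      by_contra hlt
      exact absurd hy.2 (not_le.2 (hm y (not_le.1 hlt)))
  have hA' : ℙ (X ⁻¹' {x | Finv < x ∧ F x ≤ u}) = 0 :=
    le_antisymm ((Measure.le_map_apply hX.aemeasurable _).trans hA.le) bot_le
  have hV0 : ℙ (V ⁻¹' Set.Iic 0) = 0 := by
    rw [← Measure.map_apply hV measurableSet_Iic, hVunif,
      Measure.restrict_apply measurableSet_Iic]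
    refine measure_mono_null (t := {0}) ?_ (by simp)
    rintro x ⟨h1, h2⟩
    exact le_antisymm h1 h2.1
  refine measure_mono_null ?_ (measure_union_null hA' hV0)
  rintro ω ⟨h1, h2⟩
  by_cases hv : V ω ≤ 0
  · exact Or.inr hv
  · left
    refine ⟨h2, ?_⟩
    push Not at hv
    obtain ⟨y, hy1, hy2⟩ := exists_between h2
    have hl : u ≤ Function.leftLim F (X ω) := (habove y hy1).trans (hmono.le_leftLim hy2)
    have hl2 : Function.leftLim F (X ω) ≤ F (X ω) := hmono.leftLim_le le_rfl
    rw [hU] at h1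
    by_contra hlt
    push Not at hlt
    by_cases he : Function.leftLim F (X ω) = F (X ω)
    · rw [he] at h1
      simp at h1
      linarith
    · have : 0 < V ω * (F (X ω) - Function.leftLim F (X ω)) :=
        mul_pos hv (sub_pos.2 (lt_of_le_of_ne hl2 he))
      linarith
end

section
/- Let (κ_1, ..., κ_r) be exchangeable real-valued random variables and let θ ~ Unif(0,1) be independent of (κ_1, ..., κ_r). Define the randomized conformal p-value p = (1/r) Σ_{j=1}^r (1{κ_j > κ_r} + θ·1{κ_j = κ_r}). Then p ~ Unif(0,1), i.e., P(p ≤ u) = u for every u ∈ [0,1]. -/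
open MeasureTheory ProbabilityTheory

/-- The unnormalised randomized rank of coordinate `i`. -/
noncomputable def rankF {n : ℕ} (i : Fin (n + 1)) (x : Fin (n + 1) → ℝ) (t : ℝ) : ℝ :=
  ∑ j : Fin (n + 1), ((if x j > x i then (1 : ℝ) else 0)
    + t * (if x j = x i then (1 : ℝ) else 0))

lemma telescope_aux (c f : ℝ → ℝ) (V : Finset ℝ) :
    ∑ v ∈ V, (f (∑ w ∈ V with v ≤ w, c w) - f (∑ w ∈ V with v < w, c w))
      = f (∑ w ∈ V, c w) - f 0 := by
  induction V using Finset.induction_on_min with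
  | empty => simp
  | insert a V ha ih =>
    have hn : a ∉ V := fun h => lt_irrefl _ (ha a h)
    rw [Finset.sum_insert hn]
    have h1 : (insert a V).filter (fun w => a ≤ w) = insert a V := by
      apply Finset.filter_true_of_mem
      intro w hw
      rcases Finset.mem_insert.1 hw with h | h
      · exact h.ge
      · exact (ha w h).le
    have h2 : (insert a V).filter (fun w => a < w) = V := by
      ext w
      simp only [Finset.mem_filter, Finset.mem_insert]
      constructor
      · rintro ⟨h | h, h'⟩
        · exact absurd h' (by simp [h])
        · exact h
      · intro h
        exact ⟨Or.inr h, ha w h⟩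
    rw [h1, h2]
    have h3 : ∑ v ∈ V, (f (∑ w ∈ insert a V with v ≤ w, c w)
        - f (∑ w ∈ insert a V with v < w, c w)) = f (∑ w ∈ V, c w) - f 0 := by
      rw [← ih]
      refine Finset.sum_congr rfl fun v hv => ?_
      rw [Finset.filter_insert, Finset.filter_insert, if_neg (not_le.2 (ha v hv)),
        if_neg (ha v hv).le.not_gt]
    rw [h3]
    ring

lemma rank_sum {n : ℕ} (x : Fin (n + 1) → ℝ) (f : ℝ → ℝ) :
    ∑ i, (f (∑ j, ((if x j > x i then (1 : ℝ) else 0) + (if x j = x i then (1 : ℝ) else 0)))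
        - f (∑ j, (if x j > x i then (1 : ℝ) else 0)))
          / (∑ j, (if x j = x i then (1 : ℝ) else 0))
      = f (n + 1) - f 0 := by
  classical
  set c : ℝ → ℝ := fun v => ∑ j, (if x j = v then (1 : ℝ) else 0) with hc
  set V : Finset ℝ := Finset.univ.image x with hV
  have hmem : ∀ i, x i ∈ V := fun i => Finset.mem_image_of_mem _ (Finset.mem_univ i)
  have key : ∀ P : ℝ → Prop, [DecidablePred P] →
      ∑ w ∈ V with P w, c w = ∑ j, (if P (x j) then (1 : ℝ) else 0) := by
    intro P _
    rw [hc, Finset.sum_comm]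
    refine Finset.sum_congr rfl fun j _ => ?_
    rw [Finset.sum_ite_eq]
    simp [hmem]
  have htot : ∑ w ∈ V, c w = n + 1 := by
    have := key (fun _ => True)
    simpa using this
  have hge : ∀ v, ∑ j, ((if x j > v then (1 : ℝ) else 0) + (if x j = v then (1 : ℝ) else 0))
      = ∑ w ∈ V with v ≤ w, c w := by
    intro v
    rw [key]
    refine Finset.sum_congr rfl fun j _ => ?_
    rcases lt_trichotomy (x j) v with h | h | h
    · simp [h.ne, h.not_gt, h.not_ge]
    · simp [h]
    · simp [h.ne', h, h.le]
  have hgt : ∀ v, ∑ j, (if x j > v then (1 : ℝ) else 0) = ∑ w ∈ V with v < w, c w := by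
    intro v
    rw [key]
  simp only [hge, hgt]
  rw [← htot, ← telescope_aux c f V,
    ← Finset.sum_fiberwise_of_maps_to (t := V) (g := x) (fun i _ => hmem i)]
  refine Finset.sum_congr rfl fun v hv => ?_
  obtain ⟨i, -, hi⟩ := Finset.mem_image.1 hv
  have hcv : c v = ((Finset.univ.filter (fun j => x j = v)).card : ℝ) := by
    simp [hc]
  have hpos : c v ≠ 0 := by
    rw [hcv]
    have : 0 < (Finset.univ.filter (fun j => x j = v)).card :=
      Finset.card_pos.2 ⟨i, by simp [hi]⟩
    exact_mod_cast this.ne'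
  have : ∀ i ∈ Finset.univ.filter (fun j => x j = v),
      (f (∑ w ∈ V with x i ≤ w, c w) - f (∑ w ∈ V with x i < w, c w))
        / (∑ j, (if x j = x i then (1 : ℝ) else 0))
      = (f (∑ w ∈ V with v ≤ w, c w) - f (∑ w ∈ V with v < w, c w)) / c v := by
    intro i hi
    have hi : x i = v := by simpa using hi
    rw [hi]
  rw [Finset.sum_congr rfl this, Finset.sum_const, nsmul_eq_mul, ← hcv]
  field_simp

lemma section_vol (G E s : ℝ) (hE : 0 < E) :
    (volume.restrict (Set.Icc (0 : ℝ) 1)) {t : ℝ | G + t * E ≤ s}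
      = ENNReal.ofReal ((min s (G + E) - min s G) / E) := by
  have hm : MeasurableSet {t : ℝ | G + t * E ≤ s} :=
    measurableSet_le (by fun_prop) (by fun_prop)
  rw [Measure.restrict_apply hm]
  have : {t : ℝ | G + t * E ≤ s} ∩ Set.Icc (0 : ℝ) 1 = Set.Icc 0 (min 1 ((s - G) / E)) := by
    ext t
    simp only [Set.mem_inter_iff, Set.mem_ofPred_eq, Set.mem_Icc, le_min_iff, le_div_iff₀ hE]
    constructor
    · rintro ⟨h1, h2, h3⟩
      exact ⟨h2, h3, by linarith⟩
    · rintro ⟨h1, h2, h3⟩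
      exact ⟨by linarith, h1, h2⟩
  rw [this, Real.volume_Icc, sub_zero]
  rcases le_total s G with h | h
  · rw [min_eq_left h, min_eq_left (show s ≤ G + E by linarith), sub_self, zero_div, ENNReal.ofReal_zero,
      ENNReal.ofReal_eq_zero]
    exact (min_le_right _ _).trans (div_nonpos_of_nonpos_of_nonneg (by linarith) hE.le)
  · rw [min_eq_right h]
    congr 1
    rcases le_total s (G + E) with h' | h'
    · rw [min_eq_left h', min_eq_right]
      rw [div_le_one hE]; linarith
    · rw [min_eq_right h', min_eq_left]
      · field_simp
        ring
      · rw [one_le_div hE]; linarith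

lemma sum_sections {n : ℕ} (x : Fin (n + 1) → ℝ) (s : ℝ) (h0 : 0 ≤ s) (h1 : s ≤ n + 1) :
    ∑ i, (volume.restrict (Set.Icc (0 : ℝ) 1)) {t : ℝ | rankF i x t ≤ s}
      = ENNReal.ofReal s := by
  have hE : ∀ i, 0 < ∑ j, (if x j = x i then (1 : ℝ) else 0) := fun i =>
    Finset.sum_pos' (fun j _ => by split_ifs <;> norm_num) ⟨i, Finset.mem_univ i, by simp⟩
  have h : ∀ i, (volume.restrict (Set.Icc (0 : ℝ) 1)) {t : ℝ | rankF i x t ≤ s} = _ := fun i => by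
    simp only [rankF, Finset.sum_add_distrib, ← Finset.mul_sum]
    exact section_vol _ _ s (hE i)
  simp only [h]
  rw [← ENNReal.ofReal_sum_of_nonneg]
  · have := rank_sum x (fun y => min s y)
    simp only [Finset.sum_add_distrib] at this
    rw [this, min_eq_left h1, min_eq_right h0, sub_zero]
  · intro i _
    exact div_nonneg (sub_nonneg.2 (min_le_min_left _ (by linarith [hE i]))) (hE i).le

lemma measurable_rankF {n : ℕ} (i : Fin (n + 1)) :
    Measurable (fun z : (Fin (n + 1) → ℝ) × ℝ => rankF i z.1 z.2) := by
  unfold rankF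
  refine Finset.measurable_sum _ fun j _ => ?_
  refine Measurable.add (Measurable.ite ?_ measurable_const measurable_const)
    (measurable_snd.mul (Measurable.ite ?_ measurable_const measurable_const))
  · exact measurableSet_lt (by fun_prop) (by fun_prop)
  · exact measurableSet_eq_fun (by fun_prop) (by fun_prop)

/-- **Uniformity of a randomized conformal p-value.** If `(κ 0, ..., κ n)` (so `r = n + 1`
scores) is exchangeable and `θ ~ Unif(0,1)` is independent of the scores, then the randomized
conformal p-value `p = (1/r) Σ_j (1{κ_j > κ_r} + θ·1{κ_j = κ_r})` is distributed as
`Unif(0,1)`. -/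
theorem conformal_p_value_uniform
    {Ω : Type*} [MeasureSpace Ω] [IsProbabilityMeasure (ℙ : Measure Ω)]
    (n : ℕ) (κ : Fin (n + 1) → Ω → ℝ) (hκ : ∀ j, Measurable (κ j))
    (hexch : ∀ π : Equiv.Perm (Fin (n + 1)),
      Measure.map (fun ω => fun j => κ (π j) ω) ℙ
        = Measure.map (fun ω => fun j => κ j ω) ℙ)
    (θ : Ω → ℝ) (hθ : Measurable θ)
    (hθunif : Measure.map θ ℙ = volume.restrict (Set.Icc (0 : ℝ) 1))
    (hindep : IndepFun (fun ω => fun j => κ j ω) θ ℙ)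
    (p : Ω → ℝ)
    (hp : ∀ ω, p ω = (n + 1 : ℝ)⁻¹ * ∑ j : Fin (n + 1),
      ((if κ j ω > κ (Fin.last n) ω then (1 : ℝ) else 0)
        + θ ω * (if κ j ω = κ (Fin.last n) ω then (1 : ℝ) else 0))) :
    ∀ u ∈ Set.Icc (0 : ℝ) 1, ℙ {ω | p ω ≤ u} = ENNReal.ofReal u := by
  intro u hu
  have hr : (0 : ℝ) < n + 1 := by positivity
  set s : ℝ := (n + 1) * u with hs
  have hX : Measurable (fun ω => fun j => κ j ω) := measurable_pi_lambda _ hκ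
  set ν := Measure.map (fun ω => fun j => κ j ω) ℙ with hν
  set lam : Measure ℝ := volume.restrict (Set.Icc (0 : ℝ) 1) with hlam
  let A : Fin (n + 1) → Set ((Fin (n + 1) → ℝ) × ℝ) := fun i => {z | rankF i z.1 z.2 ≤ s}
  have hA : ∀ i, MeasurableSet (A i) := fun i =>
    measurableSet_le (measurable_rankF i) measurable_const
  have hνp : IsProbabilityMeasure ν := Measure.isProbabilityMeasure_map hX.aemeasurable
  let h : Fin (n + 1) → (Fin (n + 1) → ℝ) → ENNReal := fun i x => lam {t | rankF i x t ≤ s}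
  have hh : ∀ i, Measurable (h i) := fun i => measurable_measure_prodMk_left (hA i)
  have e1 : ℙ {ω | p ω ≤ u} = ∫⁻ x, h (Fin.last n) x ∂ν := by
    have hset : {ω | p ω ≤ u} = (fun ω => ((fun j => κ j ω), θ ω)) ⁻¹' A (Fin.last n) := by
      ext ω
      simp only [Set.mem_ofPred_eq, Set.mem_preimage, A, hp, rankF, hs]
      rw [inv_mul_le_iff₀ hr]
    rw [hset, ← Measure.map_apply (hX.prodMk hθ) (hA _),
      (indepFun_iff_map_prod_eq_prod_map_map hX.aemeasurable hθ.aemeasurable).1 hindep,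
      hθunif, Measure.prod_apply (hA _)]
    rfl
  have e2 : ∀ i, ∫⁻ x, h i x ∂ν = ∫⁻ x, h (Fin.last n) x ∂ν := by
    intro i
    let π := Equiv.swap i (Fin.last n)
    have hXπ : Measurable (fun ω => fun j => κ (π j) ω) :=
      measurable_pi_lambda _ fun j => hκ _
    have e3 : ∀ ω, h (Fin.last n) (fun j => κ (π j) ω) = h i (fun j => κ j ω) := by
      intro ω
      have : ∀ t, rankF (Fin.last n) (fun j => κ (π j) ω) t = rankF i (fun j => κ j ω) t := by
        intro t
        unfold rankF
        have hl : π (Fin.last n) = i := Equiv.swap_apply_right _ _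
        beta_reduce
        rw [hl]
        exact Equiv.sum_comp π (fun j => (if κ j ω > κ i ω then (1 : ℝ) else 0)
          + t * (if κ j ω = κ i ω then (1 : ℝ) else 0))
      simp only [h, this]
    calc ∫⁻ x, h i x ∂ν = ∫⁻ ω, h i (fun j => κ j ω) ∂ℙ := lintegral_map (hh i) hX
      _ = ∫⁻ ω, h (Fin.last n) (fun j => κ (π j) ω) ∂ℙ := by simp only [e3]
      _ = ∫⁻ x, h (Fin.last n) x ∂ν := by
        rw [← hexch π, lintegral_map (hh _) hXπ]
  have e4 : ∑ i, ∫⁻ x, h i x ∂ν = ENNReal.ofReal s := by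
    rw [← lintegral_finsetSum _ (fun i _ => hh i)]
    have : ∀ x, ∑ i, h i x = ENNReal.ofReal s := fun x =>
      sum_sections x s (mul_nonneg hr.le hu.1) (by nlinarith [hu.2])
    simp [this]
  simp only [e2, Finset.sum_const, Finset.card_univ, Fintype.card_fin, nsmul_eq_mul] at e4
  rw [e1]
  have hc : ((n + 1 : ℕ) : ENNReal) = ENNReal.ofReal (n + 1) := by
    rw [← ENNReal.ofReal_natCast]; push_cast; rfl
  rw [hs, ENNReal.ofReal_mul hr.le, hc] at e4
  exact (ENNReal.mul_right_inj (by simpa using hr) ENNReal.ofReal_ne_top).1 e4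
end

section
/- Let 𝒳 and 𝒵 be measurable spaces, let (X_1, ..., X_t) be an exchangeable sequence of 𝒳-valued random variables, and let Z be a 𝒵-valued random element independent of (X_1, ..., X_t). Fix r ≤ t and a measurable function s : 𝒳 × ⟦𝒳^r⟧ × 𝒵 → ℝ, where ⟦𝒳^r⟧ denotes the set of unordered bags (multisets) of r elements of 𝒳. Define the scores κ_j = s(X_j ; ⟦X_1, ..., X_r⟧, Z) for j = 1, ..., r, where ⟦X_1, ..., X_r⟧ is the multiset of the first r data points. Then (κ_1, ..., κ_r) is an exchangeable sequence of real-valued random variables. -/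
open MeasureTheory ProbabilityTheory

/-- **Exchangeability of conformal scores.** If `(X 0, ..., X (t-1))` is an exchangeable
sequence of `𝒳`-valued random variables, `Z` is a `𝒵`-valued random element independent of the
`X`'s, `r ≤ t`, and `s` is a measurable score function whose second argument — encoded as an
`r`-tuple — is treated symmetrically (i.e. as a bag/multiset of `r` elements of `𝒳`), then the
scores `κ j = s (X j) ⟦X 0, ..., X (r-1)⟧ Z`, `j = 0, ..., r-1`, form an exchangeable sequence
of real-valued random variables. -/
theorem conformal_scores_exchangeable
    {Ω 𝒳 𝒵 : Type*} [MeasureSpace Ω] [IsProbabilityMeasure (ℙ : Measure Ω)]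
    [MeasurableSpace 𝒳] [MeasurableSpace 𝒵]
    (t r : ℕ) (hrt : r ≤ t)
    (X : Fin t → Ω → 𝒳) (hX : ∀ i, Measurable (X i))
    (hexch : ∀ π : Equiv.Perm (Fin t),
      Measure.map (fun ω => fun i => X (π i) ω) ℙ
        = Measure.map (fun ω => fun i => X i ω) ℙ)
    (Z : Ω → 𝒵) (hZ : Measurable Z)
    (hindep : IndepFun (fun ω => fun i => X i ω) Z ℙ)
    (s : 𝒳 → (Fin r → 𝒳) → 𝒵 → ℝ)
    (hs : Measurable fun q : 𝒳 × (Fin r → 𝒳) × 𝒵 => s q.1 q.2.1 q.2.2)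
    (hsym : ∀ (x : 𝒳) (y : Fin r → 𝒳) (z : 𝒵) (π : Equiv.Perm (Fin r)),
      s x (y ∘ π) z = s x y z)
    (κ : Fin r → Ω → ℝ)
    (hκ : ∀ j ω, κ j ω
      = s (X (Fin.castLE hrt j) ω) (fun i => X (Fin.castLE hrt i) ω) (Z ω)) :
    ∀ π : Equiv.Perm (Fin r),
      Measure.map (fun ω => fun j => κ (π j) ω) ℙ
        = Measure.map (fun ω => fun j => κ j ω) ℙ := by
  intro π
  let σ : Equiv.Perm (Fin t) := π.viaEmbedding (Fin.castLEEmb hrt)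
  have hσ : ∀ j, σ (Fin.castLE hrt j) = Fin.castLE hrt (π j) := fun j =>
    Equiv.Perm.viaEmbedding_apply π (Fin.castLEEmb hrt) j
  let F : (Fin t → 𝒳) × 𝒵 → Fin r → ℝ := fun p j =>
    s (p.1 (Fin.castLE hrt j)) (fun i => p.1 (Fin.castLE hrt i)) p.2
  have hF : Measurable F := by
    refine measurable_pi_lambda _ fun j => ?_
    have hg : Measurable fun p : (Fin t → 𝒳) × 𝒵 =>
        (p.1 (Fin.castLE hrt j), (fun i : Fin r => p.1 (Fin.castLE hrt i)), p.2) := by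
      fun_prop
    exact hs.comp hg
  have hX1 : Measurable (fun ω => fun i => X i ω) := measurable_pi_lambda _ hX
  have hX2 : Measurable (fun ω => fun i => X (σ i) ω) :=
    measurable_pi_lambda _ fun i => hX (σ i)
  have hperm : Measurable (fun (x : Fin t → 𝒳) i => x (σ i)) := by fun_prop
  have hindep2 : IndepFun (fun ω => fun i => X (σ i) ω) Z ℙ :=
    hindep.comp hperm measurable_id
  have e1 := (indepFun_iff_map_prod_eq_prod_map_map hX1.aemeasurable hZ.aemeasurable).1 hindep
  have e2 := (indepFun_iff_map_prod_eq_prod_map_map hX2.aemeasurable hZ.aemeasurable).1 hindep2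
  rw [hexch σ, ← e1] at e2
  have k1 : (fun ω => fun j => κ j ω) = F ∘ fun ω => ((fun i => X i ω), Z ω) := by
    funext ω j
    exact hκ j ω
  have k2 : (fun ω => fun j => κ (π j) ω) = F ∘ fun ω => ((fun i => X (σ i) ω), Z ω) := by
    funext ω j
    simp only [hκ, F, Function.comp_apply, hσ]
    exact (hsym _ (fun i => X (Fin.castLE hrt i) ω) _ π).symm
  rw [k1, k2, ← Measure.map_map hF (hX2.prodMk hZ), ← Measure.map_map hF (hX1.prodMk hZ), e2]
end

section
/- Let (W, W^{(1)}, ..., W^{(B)}) be an exchangeable sequence of B+1 real-valued random variables and let θ ~ Unif(0,1) be independent of them. Define the Monte Carlo p-value p = (1/(B+1)) (θ + Σ_{b=1}^B (1{W^{(b)} > W} + θ·1{W^{(b)} = W})). Then p ~ Unif(0,1), i.e., P(p ≤ u) = u for every u ∈ [0,1]. -/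
open MeasureTheory ProbabilityTheory

lemma telescoping_aux (g : ℝ → ℝ) (w : ℝ → ℝ) (V : Finset ℝ) :
    ∑ v ∈ V, (g (∑ a ∈ V, w a * (if v < a then (1 : ℝ) else 0) + w v)
      - g (∑ a ∈ V, w a * (if v < a then (1 : ℝ) else 0))) = g (∑ a ∈ V, w a) - g 0 := by
  induction V using Finset.induction_on_min with
  | empty => simp
  | insert m s hm ih =>
    have hms : m ∉ s := fun h => lt_irrefl _ (hm m h)
    have h1 : ∑ a ∈ s, w a * (if m < a then (1 : ℝ) else 0) = ∑ a ∈ s, w a := by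
      refine Finset.sum_congr rfl fun a ha => ?_
      rw [if_pos (hm a ha), mul_one]
    have h2 : ∑ v ∈ s, (g (∑ a ∈ insert m s, w a * (if v < a then (1 : ℝ) else 0) + w v)
      - g (∑ a ∈ insert m s, w a * (if v < a then (1 : ℝ) else 0)))
      = g (∑ a ∈ s, w a) - g 0 := by
      rw [← ih]
      refine Finset.sum_congr rfl fun v hv => ?_
      rw [Finset.sum_insert hms, if_neg (not_lt.mpr (hm v hv).le)]
      simp
    rw [Finset.sum_insert hms, h2, Finset.sum_insert hms, Finset.sum_insert hms, h1]
    simp only [lt_irrefl, if_false, mul_zero, zero_add]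
    rw [add_comm (w m)]
    ring

/-- the clamped fraction -/
noncomputable def clampFrac (x G E : ℝ) : ℝ := max (min 1 ((x - G) / E)) 0

lemma clampFrac_nonneg (x G E : ℝ) : 0 ≤ clampFrac x G E := le_max_right _ _

lemma clampFrac_mul (x G E : ℝ) (hE : 0 < E) :
    E * clampFrac x G E = min x (G + E) - min x G := by
  unfold clampFrac
  rcases le_total x G with h | h
  · have : (x - G) / E ≤ 0 := div_nonpos_of_nonpos_of_nonneg (by linarith) hE.le
    rw [min_eq_right (by linarith), max_eq_right this, min_eq_left h, min_eq_left (by linarith)]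
    ring
  · have h0 : 0 ≤ (x - G) / E := div_nonneg (by linarith) hE.le
    rw [max_eq_left (le_min zero_le_one h0), min_eq_right h]
    rcases le_total x (G + E) with h' | h'
    · rw [min_eq_right ((div_le_one hE).2 (by linarith)), min_eq_left h']
      field_simp
    · rw [min_eq_left ((one_le_div hE).2 (by linarith)), min_eq_right h']
      ring

lemma sum_clampFrac {n : ℕ} (y : Fin n → ℝ) (x : ℝ) (hx0 : 0 ≤ x) (hxn : x ≤ n) :
    ∑ j, clampFrac x (∑ b, if y j < y b then (1 : ℝ) else 0)
      (∑ b, if y b = y j then (1 : ℝ) else 0) = x := by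
  set w : ℝ → ℝ := fun v => ∑ b, if y b = v then (1 : ℝ) else 0 with hw
  have hwc : ∀ v, w v = ((Finset.univ.filter fun b => y b = v).card : ℝ) := by
    intro v; simp [hw]
  set V := Finset.univ.image y with hV
  have key : ∀ f : ℝ → ℝ, ∑ j, f (y j) = ∑ v ∈ V, w v * f v := by
    intro f
    rw [Finset.sum_comp f y]
    refine Finset.sum_congr rfl fun v _ => ?_
    rw [nsmul_eq_mul, hwc]
  have hG : ∀ v, (∑ b, if v < y b then (1 : ℝ) else 0)
      = ∑ a ∈ V, w a * (if v < a then (1 : ℝ) else 0) :=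
    fun v => key (fun a => if v < a then (1 : ℝ) else 0)
  have htot : ∑ a ∈ V, w a = n := by
    have := key (fun _ => 1)
    simpa using this.symm
  have := key (fun v => clampFrac x (∑ b, if v < y b then (1 : ℝ) else 0) (w v))
  refine this.trans ?_
  have h3 := telescoping_aux (fun s => min x s) w V
  rw [htot] at h3
  simp only [min_eq_left hxn, min_eq_right hx0, sub_zero] at h3
  refine Eq.trans (Finset.sum_congr rfl fun v hv => ?_) h3
  rw [clampFrac_mul, hG]
  rw [hwc]
  obtain ⟨j, -, hj⟩ := Finset.mem_image.1 hv
  exact_mod_cast Finset.card_pos.2 ⟨j, by simp [hj]⟩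

lemma unif_clampFrac (x G E : ℝ) (hE : 0 < E) :
    (volume.restrict (Set.Icc (0 : ℝ) 1)) {t | G + t * E ≤ x}
      = ENNReal.ofReal (clampFrac x G E) := by
  have h1 : {t : ℝ | G + t * E ≤ x} = Set.Iic ((x - G) / E) := by
    ext t
    simp only [Set.mem_ofPred_eq, Set.mem_Iic, le_div_iff₀ hE]
    constructor <;> intro h <;> linarith
  have h2 : Set.Iic ((x - G) / E) ∩ Set.Icc (0 : ℝ) 1 = Set.Icc 0 (min 1 ((x - G) / E)) := by
    ext t
    simp only [Set.mem_inter_iff, Set.mem_Iic, Set.mem_Icc, le_min_iff]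
    tauto
  rw [h1, Measure.restrict_apply measurableSet_Iic, h2, Real.volume_Icc, sub_zero, clampFrac]
  rcases le_total (min 1 ((x - G) / E)) 0 with h | h
  · rw [max_eq_right h, ENNReal.ofReal_of_nonpos h, ENNReal.ofReal_zero]
  · rw [max_eq_left h]

/-- unnormalised p-value with `j` as the observed index -/
noncomputable def pRaw {n : ℕ} (j : Fin n) (y : Fin n → ℝ) (t : ℝ) : ℝ :=
  (∑ b, if y j < y b then (1 : ℝ) else 0) + t * (∑ b, if y b = y j then (1 : ℝ) else 0)

lemma measurable_pRaw {n : ℕ} (j : Fin n) :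
    Measurable (fun z : (Fin n → ℝ) × ℝ => pRaw j z.1 z.2) := by
  unfold pRaw
  refine Measurable.add (Finset.measurable_sum _ fun b _ => ?_)
    (measurable_snd.mul (Finset.measurable_sum _ fun b _ => ?_))
  · exact Measurable.ite (measurableSet_lt (by fun_prop) (by fun_prop)) measurable_const
      measurable_const
  · exact Measurable.ite (measurableSet_eq_fun (by fun_prop) (by fun_prop)) measurable_const
      measurable_const

lemma pRaw_perm {n : ℕ} (j : Fin n) (π : Equiv.Perm (Fin n)) (y : Fin n → ℝ) (t : ℝ) :
    pRaw j (fun b => y (π b)) t = pRaw (π j) y t := by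
  unfold pRaw
  rw [Equiv.sum_comp π (fun b => if y (π j) < y b then (1 : ℝ) else 0),
    Equiv.sum_comp π (fun b => if y b = y (π j) then (1 : ℝ) else 0)]



/-- **Uniformity of the Monte Carlo p-value of the empirical test.** Let
`(Y 0, Y 1, ..., Y B)` be an exchangeable sequence of `B + 1` real random variables, where
`W = Y 0` is the observed statistic and `W⁽ᵇ⁾ = Y b` (`b = 1, ..., B`) are the simulated
copies, and let `θ ~ Unif(0,1)` be independent of them. Then the Monte Carlo p-value
`p = (1/(B+1)) (θ + Σ_{b=1}^B (1{W⁽ᵇ⁾ > W} + θ·1{W⁽ᵇ⁾ = W}))` is distributed as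
`Unif(0,1)`. -/
theorem monte_carlo_p_value_uniform
    {Ω : Type*} [MeasureSpace Ω] [IsProbabilityMeasure (ℙ : Measure Ω)]
    (B : ℕ) (Y : Fin (B + 1) → Ω → ℝ) (hY : ∀ b, Measurable (Y b))
    (hexch : ∀ π : Equiv.Perm (Fin (B + 1)),
      Measure.map (fun ω => fun b => Y (π b) ω) ℙ
        = Measure.map (fun ω => fun b => Y b ω) ℙ)
    (θ : Ω → ℝ) (hθ : Measurable θ)
    (hθunif : Measure.map θ ℙ = volume.restrict (Set.Icc (0 : ℝ) 1))
    (hindep : IndepFun (fun ω => fun b => Y b ω) θ ℙ)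
    (p : Ω → ℝ)
    (hp : ∀ ω, p ω = (B + 1 : ℝ)⁻¹ * (θ ω + ∑ b : Fin B,
      ((if Y b.succ ω > Y 0 ω then (1 : ℝ) else 0)
        + θ ω * (if Y b.succ ω = Y 0 ω then (1 : ℝ) else 0)))) :
    ∀ u ∈ Set.Icc (0 : ℝ) 1, ℙ {ω | p ω ≤ u} = ENNReal.ofReal u := by
  intro u hu
  set ν : Measure ℝ := volume.restrict (Set.Icc (0 : ℝ) 1) with hν
  set Z : Ω → (Fin (B + 1) → ℝ) := fun ω b => Y b ω with hZ
  have hZm : Measurable Z := measurable_pi_lambda _ hY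
  set μ := Measure.map Z ℙ with hμ
  have : IsProbabilityMeasure μ := Measure.isProbabilityMeasure_map hZm.aemeasurable
  have hn : (0 : ℝ) < (B : ℝ) + 1 := by positivity
  set x : ℝ := ((B : ℝ) + 1) * u with hx
  have hmeas : ∀ j : Fin (B + 1),
      MeasurableSet {z : (Fin (B + 1) → ℝ) × ℝ | pRaw j z.1 z.2 ≤ x} :=
    fun j => measurableSet_le (measurable_pRaw j) measurable_const
  have hset : {ω | p ω ≤ u} = (fun ω => (Z ω, θ ω)) ⁻¹' {z | pRaw 0 z.1 z.2 ≤ x} := by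
    ext ω
    have : p ω = ((B : ℝ) + 1)⁻¹ * pRaw 0 (Z ω) (θ ω) := by
      rw [hp, pRaw, Fin.sum_univ_succ, Fin.sum_univ_succ, Finset.sum_add_distrib,
        ← Finset.mul_sum]
      simp only [hZ, gt_iff_lt, lt_irrefl, if_false, if_true]
      ring
    simp only [Set.mem_ofPred_eq, Set.mem_preimage, this, hx]
    rw [inv_mul_le_iff₀ hn]
  have hprod : Measure.map (fun ω => (Z ω, θ ω)) ℙ = μ.prod ν := by
    rw [(indepFun_iff_map_prod_eq_prod_map_map hZm.aemeasurable hθ.aemeasurable).1 hindep, hθunif]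
  have hint : ∀ j : Fin (B + 1), ℙ {ω | p ω ≤ u} = ∫⁻ y, ν {t | pRaw j y t ≤ x} ∂μ := by
    intro j
    have hm0 : Measurable fun y => ν {t | pRaw (0 : Fin (B + 1)) y t ≤ x} :=
      measurable_measure_prodMk_left (hmeas 0)
    rw [hset, ← Measure.map_apply (hZm.prodMk hθ) (hmeas 0), hprod, Measure.prod_apply (hmeas 0)]
    change ∫⁻ y, ν {t | pRaw 0 y t ≤ x} ∂μ = _
    have hπm : Measurable fun y : Fin (B + 1) → ℝ => fun b => y (Equiv.swap 0 j b) := by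
      fun_prop
    have hμπ : Measure.map (fun y : Fin (B + 1) → ℝ => fun b => y (Equiv.swap 0 j b)) μ = μ := by
      rw [hμ, Measure.map_map hπm hZm]
      exact hexch (Equiv.swap 0 j)
    conv_lhs => rw [← hμπ]
    rw [lintegral_map hm0 hπm]
    simp only [pRaw_perm, Equiv.swap_apply_left]
  have hsum : ∑ _j : Fin (B + 1), ℙ {ω | p ω ≤ u} = ENNReal.ofReal x := by
    rw [Finset.sum_congr rfl fun j _ => hint j]
    have hmj : ∀ j : Fin (B + 1), Measurable fun y => ν {t | pRaw j y t ≤ x} :=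
      fun j => measurable_measure_prodMk_left (hmeas j)
    rw [← lintegral_finsetSum _ fun j _ => hmj j]
    have : ∀ y : Fin (B + 1) → ℝ, ∑ j, ν {t | pRaw j y t ≤ x} = ENNReal.ofReal x := by
      intro y
      have h1 : ∀ j ∈ (Finset.univ : Finset (Fin (B + 1))), ν {t | pRaw j y t ≤ x} =
          ENNReal.ofReal (clampFrac x (∑ b, if y j < y b then (1 : ℝ) else 0)
            (∑ b, if y b = y j then (1 : ℝ) else 0)) := by
        intro j _
        refine unif_clampFrac _ _ _ ?_
        rw [Finset.sum_boole]
        exact_mod_cast Finset.card_pos.2 ⟨j, by simp⟩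
      rw [Finset.sum_congr rfl h1, ← ENNReal.ofReal_sum_of_nonneg fun j _ => clampFrac_nonneg _ _ _,
        sum_clampFrac y x (mul_nonneg hn.le hu.1)]
      push_cast
      exact mul_le_of_le_one_right hn.le hu.2
    simp [this]
  rw [Finset.sum_const, Finset.card_univ, Fintype.card_fin, nsmul_eq_mul, hx,
    ENNReal.ofReal_mul hn.le] at hsum
  have hc : ENNReal.ofReal ((B : ℝ) + 1) = ((B + 1 : ℕ) : ENNReal) := by
    rw [← ENNReal.ofReal_natCast]; push_cast; rfl
  rw [hc] at hsum
  exact (ENNReal.mul_right_inj (by simp) (ENNReal.natCast_ne_top _)).1 hsum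
end

section
/- Let 𝒳 be a measurable space and let Q and R be probability measures on 𝒳 with densities q = dQ/d(Q+R) and r = dR/d(Q+R) with respect to Q + R. Let s* (x) = q(x)/r(x) denote the likelihood ratio score (taking values in [0, ∞], with the convention q(x)/0 = ∞ when q(x) > 0). Fix k ∈ {1, ..., n} and suppose X_1, ..., X_k are i.i.d. from R and X_{k+1}, ..., X_{n+1} are i.i.d. from Q, all mutually independent, and let θ_1, ..., θ_n be i.i.d. Unif(0,1) independent of the X's. For a measurable score function s, define the normalized rank functional T_n[s] = (1/n) Σ_{i=1}^n (1{s(X_i) < s(X_{n+1})} + θ_i·1{s(X_i) = s(X_{n+1})}). Then for every measurable s : 𝒳 → ℝ, E[T_n[s*]] ≥ E[T_n[s]]. -/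
open MeasureTheory ProbabilityTheory

/-- The normalized rank functional `T_n[s]`, viewed as a function on the canonical space of
the data `(X 1, ..., X (n+1))` (first component) and the auxiliary randomization variables
`(θ 1, ..., θ n)` (second component):
`T_n[s](x, θ) = (1/n) Σ_{i=1}^n (1{s(x_i) < s(x_{n+1})} + θ_i · 1{s(x_i) = s(x_{n+1})})`. -/
noncomputable def rankStat {𝒳 β : Type*} [LinearOrder β] (n : ℕ) (s : 𝒳 → β)
    (p : (Fin (n + 1) → 𝒳) × (Fin n → ℝ)) : ℝ :=
  (n : ℝ)⁻¹ * ∑ i : Fin n,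
    ((if s (p.1 i.castSucc) < s (p.1 (Fin.last n)) then (1 : ℝ) else 0)
      + p.2 i * (if s (p.1 i.castSucc) = s (p.1 (Fin.last n)) then (1 : ℝ) else 0))

/-- The symmetrised comparison kernel: the rank kernel with `θ` averaged out. -/
noncomputable def cmpKer {𝒳 β : Type*} [LinearOrder β] (s : 𝒳 → β) (z : 𝒳 × 𝒳) : ℝ :=
  (if s z.1 < s z.2 then (1 : ℝ) else 0) + 2⁻¹ * (if s z.1 = s z.2 then (1 : ℝ) else 0)

lemma cmpKer_nonneg {𝒳 β : Type*} [LinearOrder β] (s : 𝒳 → β) (z : 𝒳 × 𝒳) :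
    0 ≤ cmpKer s z := by
  unfold cmpKer; split_ifs <;> norm_num

lemma cmpKer_le_one {𝒳 β : Type*} [LinearOrder β] (s : 𝒳 → β) (z : 𝒳 × 𝒳) :
    cmpKer s z ≤ 1 := by
  unfold cmpKer
  rcases lt_trichotomy (s z.1) (s z.2) with h | h | h
  · simp [h, h.ne]
  · simp [h]; norm_num
  · simp [h.not_gt, h.ne']

lemma cmpKer_swap {𝒳 β : Type*} [LinearOrder β] (s : 𝒳 → β) (z : 𝒳 × 𝒳) :
    cmpKer s z.swap = 1 - cmpKer s z := by
  unfold cmpKer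
  rcases lt_trichotomy (s z.1) (s z.2) with h | h | h
  · simp [h, h.ne', h.ne, h.not_gt]
  · simp [h]; norm_num
  · simp [h.not_gt, h.ne', h, h.ne]

section meas

variable {𝒳 β : Type*} [MeasurableSpace 𝒳] [LinearOrder β] [TopologicalSpace β]
  [OrderClosedTopology β] [SecondCountableTopology β] [MeasurableSpace β] [OpensMeasurableSpace β]

lemma measurable_ltInd (s : 𝒳 → β) (hs : Measurable s) :
    Measurable (fun z : 𝒳 × 𝒳 => if s z.1 < s z.2 then (1 : ℝ) else 0) :=
  Measurable.ite (measurableSet_lt (hs.comp measurable_fst) (hs.comp measurable_snd))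
    measurable_const measurable_const

lemma measurable_eqInd (s : 𝒳 → β) (hs : Measurable s) :
    Measurable (fun z : 𝒳 × 𝒳 => if s z.1 = s z.2 then (1 : ℝ) else 0) :=
  Measurable.ite (measurableSet_eq_fun (hs.comp measurable_fst) (hs.comp measurable_snd))
    measurable_const measurable_const

lemma measurable_cmpKer (s : 𝒳 → β) (hs : Measurable s) : Measurable (cmpKer s) :=
  (measurable_ltInd s hs).add ((measurable_eqInd s hs).const_mul _)

lemma integrable_cmpKer (s : 𝒳 → β) (hs : Measurable s) (μ : Measure (𝒳 × 𝒳))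
    [IsFiniteMeasure μ] : Integrable (cmpKer s) μ :=
  Integrable.of_bound (measurable_cmpKer s hs).aestronglyMeasurable 1
    (Filter.Eventually.of_forall fun z => by
      rw [Real.norm_of_nonneg (cmpKer_nonneg s z)]; exact cmpKer_le_one s z)

lemma map_pair_pi {n : ℕ} (P : Fin (n + 1) → Measure 𝒳) [∀ i, IsProbabilityMeasure (P i)]
    (i : Fin n) :
    (Measure.pi P).map (fun x => (x i.castSucc, x (Fin.last n)))
      = (P i.castSucc).prod (P (Fin.last n)) := by
  have h := iIndepFun_pi (μ := P) (X := fun _ x => x) (fun _ => aemeasurable_id)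
  have h2 := h.indepFun (i := i.castSucc) (j := Fin.last n) (Fin.castSucc_lt_last i).ne
  rw [indepFun_iff_map_prod_eq_prod_map_map (measurable_pi_apply _).aemeasurable
    (measurable_pi_apply _).aemeasurable] at h2
  rw [h2]
  congr 1
  · exact (measurePreserving_eval P _).map_eq
  · exact (measurePreserving_eval P _).map_eq

lemma integral_theta {n : ℕ} (i : Fin n) :
    ∫ t, t i ∂(Measure.pi fun _ : Fin n => volume.restrict (Set.Icc (0 : ℝ) 1)) = 2⁻¹ := by
  haveI : IsProbabilityMeasure ((volume : Measure ℝ).restrict (Set.Icc (0 : ℝ) 1)) :=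
    ⟨by simp⟩
  rw [integral_comp_eval (μ := fun _ : Fin n => (volume : Measure ℝ).restrict (Set.Icc (0 : ℝ) 1))
    (f := fun x : ℝ => x) aestronglyMeasurable_id]
  rw [integral_Icc_eq_integral_Ioc, ← intervalIntegral.integral_of_le zero_le_one]
  simp

lemma integrable_theta {n : ℕ} (i : Fin n) :
    Integrable (fun t => t i)
      (Measure.pi fun _ : Fin n => volume.restrict (Set.Icc (0 : ℝ) 1)) := by
  by_contra h
  have := integral_theta i
  rw [integral_undef h] at this
  norm_num at this

lemma integral_rankStat {n : ℕ} (P : Fin (n + 1) → Measure 𝒳) [∀ i, IsProbabilityMeasure (P i)]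
    (s : 𝒳 → β) (hs : Measurable s) :
    ∫ p, rankStat n s p ∂((Measure.pi P).prod
      (Measure.pi fun _ : Fin n => volume.restrict (Set.Icc (0 : ℝ) 1)))
    = (n : ℝ)⁻¹ * ∑ i : Fin n,
        ∫ z, cmpKer s z ∂((P i.castSucc).prod (P (Fin.last n))) := by
  haveI : IsProbabilityMeasure ((volume : Measure ℝ).restrict (Set.Icc (0 : ℝ) 1)) :=
    ⟨by simp⟩
  have hpm (i : Fin n) :
      Measurable (fun x : Fin (n + 1) → 𝒳 => (x i.castSucc, x (Fin.last n))) :=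
    (measurable_pi_apply _).prodMk (measurable_pi_apply _)
  have hI1 (i : Fin n) : Integrable (fun x : Fin (n + 1) → 𝒳 =>
      if s (x i.castSucc) < s (x (Fin.last n)) then (1 : ℝ) else 0) (Measure.pi P) :=
    Integrable.of_bound ((measurable_ltInd s hs).comp (hpm i)).aestronglyMeasurable 1
      (Filter.Eventually.of_forall fun z => by split_ifs <;> simp)
  have hI2 (i : Fin n) : Integrable (fun x : Fin (n + 1) → 𝒳 =>
      if s (x i.castSucc) = s (x (Fin.last n)) then (1 : ℝ) else 0) (Measure.pi P) :=
    Integrable.of_bound ((measurable_eqInd s hs).comp (hpm i)).aestronglyMeasurable 1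
      (Filter.Eventually.of_forall fun z => by split_ifs <;> simp)
  have hJ1 (i : Fin n) := (hI1 i).comp_fst
    (Measure.pi fun _ : Fin n => (volume : Measure ℝ).restrict (Set.Icc (0 : ℝ) 1))
  have hJ2 (i : Fin n) := (hI2 i).mul_prod (integrable_theta i)
  have hJ2' (i : Fin n) : Integrable (fun p : (Fin (n + 1) → 𝒳) × (Fin n → ℝ) =>
      p.2 i * (if s (p.1 i.castSucc) = s (p.1 (Fin.last n)) then (1 : ℝ) else 0))
      ((Measure.pi P).prod
        (Measure.pi fun _ : Fin n => volume.restrict (Set.Icc (0 : ℝ) 1))) := by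
    refine (hJ2 i).congr (Filter.Eventually.of_forall fun p => ?_)
    exact mul_comm _ _
  unfold rankStat
  rw [integral_const_mul, integral_finsetSum]
  swap
  · exact fun i _ => (hJ1 i).add (hJ2' i)
  congr 1
  refine Finset.sum_congr rfl fun i _ => ?_
  rw [integral_add (hJ1 i) (hJ2' i)]
  have e1 := integral_fun_fst (μ := Measure.pi P)
    (ν := Measure.pi fun _ : Fin n => (volume : Measure ℝ).restrict (Set.Icc (0 : ℝ) 1))
    (fun x : Fin (n + 1) → 𝒳 =>
      if s (x i.castSucc) < s (x (Fin.last n)) then (1 : ℝ) else 0)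
  have e2 := integral_prod_mul (μ := Measure.pi P)
    (ν := Measure.pi fun _ : Fin n => (volume : Measure ℝ).restrict (Set.Icc (0 : ℝ) 1))
    (fun x : Fin (n + 1) → 𝒳 =>
      if s (x i.castSucc) = s (x (Fin.last n)) then (1 : ℝ) else 0) (fun t => t i)
  simp_rw [mul_comm (_ : ℝ) (if _ = _ then (1 : ℝ) else 0)]
  rw [e1, e2, integral_theta, ← map_pair_pi P i, integral_map (hpm i).aemeasurable
    (measurable_cmpKer s hs).aestronglyMeasurable]
  unfold cmpKer
  rw [integral_add (hI1 i) ((hI2 i).const_mul _), integral_const_mul]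
  simp [mul_comm]

end meas

lemma ratio_lt {a b c d : ENNReal} (ha : a ≠ ⊤) (hb : b ≠ ⊤) (hc : c ≠ ⊤) (hd : d ≠ ⊤)
    (h : a * d < c * b) : a / b < c / d := by
  have hb0 : b ≠ 0 := by rintro rfl; simp at h
  have hc0 : c ≠ 0 := by rintro rfl; simp at h
  rw [ENNReal.div_lt_iff (Or.inl hb0) (Or.inl hb)]
  by_cases hd0 : d = 0
  · subst hd0
    rw [ENNReal.div_zero hc0, ENNReal.top_mul hb0]
    exact ha.lt_top
  · rw [← ENNReal.mul_div_right_comm, ENNReal.lt_div_iff_mul_lt (Or.inl hd0) (Or.inl hd)]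
    exact h

lemma main_compare {𝒳 : Type*} [MeasurableSpace 𝒳]
    (Q R : Measure 𝒳) [IsProbabilityMeasure Q] [IsProbabilityMeasure R]
    (sstar : 𝒳 → ENNReal)
    (hsstar : sstar = fun x => Q.rnDeriv (Q + R) x / R.rnDeriv (Q + R) x)
    (hm : Measurable sstar) (s : 𝒳 → ℝ) (hs : Measurable s) :
    ∫ z, cmpKer s z ∂(R.prod Q) ≤ ∫ z, cmpKer sstar z ∂(R.prod Q) := by
  set ν := Q + R with hν
  set q := Q.rnDeriv ν with hq
  set r := R.rnDeriv ν with hr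
  have hqm : Measurable q := Measure.measurable_rnDeriv _ _
  have hrm : Measurable r := Measure.measurable_rnDeriv _ _
  have hQ : ν.withDensity q = Q :=
    Measure.withDensity_rnDeriv_eq _ _ (Measure.absolutelyContinuous_of_le (Measure.le_add_right le_rfl))
  have hR : ν.withDensity r = R :=
    Measure.withDensity_rnDeriv_eq _ _ (Measure.absolutelyContinuous_of_le (Measure.le_add_left le_rfl))
  have hqt : ∀ᵐ x ∂ν, q x < ⊤ := Measure.rnDeriv_lt_top _ _
  have hrt : ∀ᵐ x ∂ν, r x < ⊤ := Measure.rnDeriv_lt_top _ _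
  have q1 : ∀ᵐ z ∂(ν.prod ν), q z.1 < ⊤ := Measure.quasiMeasurePreserving_fst.ae hqt
  have q2 : ∀ᵐ z ∂(ν.prod ν), q z.2 < ⊤ := Measure.quasiMeasurePreserving_snd.ae hqt
  have r1 : ∀ᵐ z ∂(ν.prod ν), r z.1 < ⊤ := Measure.quasiMeasurePreserving_fst.ae hrt
  have r2 : ∀ᵐ z ∂(ν.prod ν), r z.2 < ⊤ := Measure.quasiMeasurePreserving_snd.ae hrt
  have hRQ : R.prod Q = (ν.prod ν).withDensity (fun z => r z.1 * q z.2) := by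
    rw [← prod_withDensity hrm hqm, hQ, hR]
  have hQR : Q.prod R = (ν.prod ν).withDensity (fun z => q z.1 * r z.2) := by
    rw [← prod_withDensity hqm hrm, hQ, hR]
  have m1 : Measurable (fun z : 𝒳 × 𝒳 => r z.1 * q z.2) := by fun_prop
  have m2 : Measurable (fun z : 𝒳 × 𝒳 => q z.1 * r z.2) := by fun_prop
  have t1 : ∀ᵐ z ∂(ν.prod ν), r z.1 * q z.2 < ⊤ := by
    filter_upwards [r1, q2] with z h1 h2 using ENNReal.mul_lt_top h1 h2
  have t2 : ∀ᵐ z ∂(ν.prod ν), q z.1 * r z.2 < ⊤ := by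
    filter_upwards [q1, r2] with z h1 h2 using ENNReal.mul_lt_top h1 h2
  let h : 𝒳 × 𝒳 → ℝ := fun z => cmpKer sstar z - cmpKer s z
  have hi1 : Integrable h (R.prod Q) := (integrable_cmpKer _ hm _).sub (integrable_cmpKer _ hs _)
  have hi2 : Integrable h (Q.prod R) := (integrable_cmpKer _ hm _).sub (integrable_cmpKer _ hs _)
  have hsw : ∫ z, h z ∂(R.prod Q) = - ∫ z, h z ∂(Q.prod R) := by
    rw [← integral_prod_swap, ← integral_neg]
    refine integral_congr_ae (Filter.Eventually.of_forall fun z => ?_)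
    simp only [h, cmpKer_swap]
    ring
  have hnn : 0 ≤ ∫ z, h z ∂(R.prod Q) - ∫ z, h z ∂(Q.prod R) := by
    rw [hRQ, integrable_withDensity_iff_integrable_smul' m1 t1] at hi1
    rw [hQR, integrable_withDensity_iff_integrable_smul' m2 t2] at hi2
    rw [hRQ, hQR, integral_withDensity_eq_integral_toReal_smul m1 t1,
      integral_withDensity_eq_integral_toReal_smul m2 t2, ← integral_sub hi1 hi2]
    refine integral_nonneg_of_ae ?_
    filter_upwards [q1, q2, r1, r2, t1, t2] with z a1 a2 b1 b2 c1 c2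
    simp only [Pi.zero_apply, smul_eq_mul]
    rw [← sub_mul]
    rcases lt_trichotomy (q z.1 * r z.2) (r z.1 * q z.2) with hl | hl | hl
    · have hlt : sstar z.1 < sstar z.2 := by
        rw [hsstar]
        exact ratio_lt a1.ne b1.ne a2.ne b2.ne (by rwa [mul_comm (q z.2)])
      have hk : cmpKer sstar z = 1 := by simp [cmpKer, hlt, hlt.ne]
      have := (ENNReal.toReal_lt_toReal c2.ne c1.ne).2 hl
      refine mul_nonneg (by linarith) ?_
      simp only [h, hk]
      linarith [cmpKer_le_one s z]
    · rw [hl]; simp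
    · have hlt : sstar z.2 < sstar z.1 := by
        rw [hsstar]
        exact ratio_lt a2.ne b2.ne a1.ne b1.ne (by rwa [mul_comm (q z.2)])
      have hk : cmpKer sstar z = 0 := by simp [cmpKer, hlt.not_gt, hlt.ne']
      have := (ENNReal.toReal_lt_toReal c1.ne c2.ne).2 hl
      refine mul_nonneg_of_nonpos_of_nonpos (by linarith) ?_
      simp only [h, hk]
      linarith [cmpKer_nonneg s z]
  have hfin : 0 ≤ ∫ z, h z ∂(R.prod Q) := by linarith
  simp only [h] at hfin
  rw [integral_sub (integrable_cmpKer _ hm _) (integrable_cmpKer _ hs _)] at hfin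
  linarith

lemma same_half {𝒳 β : Type*} [MeasurableSpace 𝒳] [LinearOrder β] [TopologicalSpace β]
    [OrderClosedTopology β] [SecondCountableTopology β] [MeasurableSpace β]
    [OpensMeasurableSpace β]
    (Q : Measure 𝒳) [IsProbabilityMeasure Q] (s : 𝒳 → β) (hs : Measurable s) :
    ∫ z, cmpKer s z ∂(Q.prod Q) = 2⁻¹ := by
  have h := integral_prod_swap (μ := Q) (ν := Q) (cmpKer s)
  simp_rw [cmpKer_swap] at h
  rw [integral_sub (integrable_const _) (integrable_cmpKer s hs _)] at h
  simp at h
  linarith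

/-- **Conformal Neyman–Pearson lemma (expected rank version).** Under the alternative where
`X 1, ..., X k` are i.i.d. from `R` and `X (k+1), ..., X (n+1)` are i.i.d. from `Q`, all
mutually independent, with `θ 1, ..., θ n` i.i.d. `Unif(0,1)` independent of the `X`'s (so the
joint law is the product measure `μ` below), the likelihood ratio score
`s* = (dQ/d(Q+R)) / (dR/d(Q+R))` (valued in `[0,∞]`, with `q/0 = ∞` when `q > 0`) maximizes
the expected normalized rank: `E[T_n[s*]] ≥ E[T_n[s]]` for every measurable `s : 𝒳 → ℝ`. -/
theorem conformal_neyman_pearson_expected_rank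
    {𝒳 : Type*} [MeasurableSpace 𝒳]
    (Q R : Measure 𝒳) [IsProbabilityMeasure Q] [IsProbabilityMeasure R]
    (n k : ℕ) (hk1 : 1 ≤ k) (hkn : k ≤ n)
    (μ : Measure ((Fin (n + 1) → 𝒳) × (Fin n → ℝ)))
    (hμ : μ = (Measure.pi fun i : Fin (n + 1) => if (i : ℕ) < k then R else Q).prod
      (Measure.pi fun _ : Fin n => volume.restrict (Set.Icc (0 : ℝ) 1)))
    (sstar : 𝒳 → ENNReal)
    (hsstar : sstar = fun x => Q.rnDeriv (Q + R) x / R.rnDeriv (Q + R) x)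
    (s : 𝒳 → ℝ) (hs : Measurable s) :
    ∫ p, rankStat n sstar p ∂μ ≥ ∫ p, rankStat n s p ∂μ := by
  have hm : Measurable sstar := by
    rw [hsstar]
    exact (Measure.measurable_rnDeriv _ _).div (Measure.measurable_rnDeriv _ _)
  haveI : ∀ i : Fin (n + 1), IsProbabilityMeasure (if (i : ℕ) < k then R else Q) := by
    intro i; split_ifs <;> infer_instance
  rw [hμ, integral_rankStat _ s hs, integral_rankStat _ sstar hm]
  refine mul_le_mul_of_nonneg_left (Finset.sum_le_sum fun i _ => ?_) (by positivity)
  have hl : ¬ ((Fin.last n : Fin (n + 1)) : ℕ) < k := by simpa using hkn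
  simp only [if_neg hl]
  by_cases hi : ((i.castSucc : Fin (n + 1)) : ℕ) < k
  · simp only [if_pos hi]
    exact main_compare Q R sstar hsstar hm s hs
  · simp only [if_neg hi]
    rw [same_half Q s hs, same_half Q sstar hm]
end

section
/- Let X_1, ..., X_{n+1} be an exchangeable sequence of 𝒳-valued random variables and let f : 𝒳 → [0, ∞) be a measurable function such that P( Σ_{i=1}^{n+1} f(X_i) > 0 ) = 1. Then E[ f(X_{n+1}) / ( (1/(n+1)) Σ_{i=1}^{n+1} f(X_i) ) ] = 1. In particular, the statistic f(X_{n+1}) / ( (1/(n+1)) Σ_{i=1}^{n+1} f(X_i) ) is an e-variable for testing the exchangeability of X_1, ..., X_{n+1}. -/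
open MeasureTheory ProbabilityTheory

/-- **The likelihood-ratio conformal e-variable has expectation one.** Let
`(X 1, ..., X (n+1))` be an exchangeable sequence of `𝒳`-valued random variables and let
`f : 𝒳 → [0,∞)` be measurable with `Σ_{i=1}^{n+1} f(X_i) > 0` almost surely. Then
`E[ f(X_{n+1}) / ((1/(n+1)) Σ_{i=1}^{n+1} f(X_i)) ] = 1`; in particular this statistic is an
e-variable for testing exchangeability. -/
theorem conformal_e_variable_expectation_one
    {Ω 𝒳 : Type*} [MeasureSpace Ω] [IsProbabilityMeasure (ℙ : Measure Ω)]
    [MeasurableSpace 𝒳]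
    (n : ℕ) (X : Fin (n + 1) → Ω → 𝒳) (hX : ∀ i, Measurable (X i))
    (hexch : ∀ π : Equiv.Perm (Fin (n + 1)),
      Measure.map (fun ω => fun i => X (π i) ω) ℙ
        = Measure.map (fun ω => fun i => X i ω) ℙ)
    (f : 𝒳 → ℝ) (hf : Measurable f) (hf0 : ∀ x, 0 ≤ f x)
    (hpos : ℙ {ω | 0 < ∑ i : Fin (n + 1), f (X i ω)} = 1) :
    ∫ ω, f (X (Fin.last n) ω)
      / ((n + 1 : ℝ)⁻¹ * ∑ i : Fin (n + 1), f (X i ω)) ∂ℙ = 1 := by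
  have hn : (0 : ℝ) < n + 1 := by positivity
  have hfX : ∀ i, Measurable fun ω => f (X i ω) := fun i => hf.comp (hX i)
  have hS : Measurable fun ω => ∑ i : Fin (n + 1), f (X i ω) :=
    Finset.measurable_sum _ fun i _ => hfX i
  have hmeas : ∀ j, Measurable fun ω => f (X j ω)
      / ((n + 1 : ℝ)⁻¹ * ∑ i : Fin (n + 1), f (X i ω)) :=
    fun j => (hfX j).div (hS.const_mul _)
  have hae : ∀ᵐ ω ∂(ℙ : Measure Ω), 0 < ∑ i : Fin (n + 1), f (X i ω) :=
    (mem_ae_iff_prob_eq_one (measurableSet_lt measurable_const hS)).2 hpos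
  have hint : ∀ j, Integrable (fun ω => f (X j ω)
      / ((n + 1 : ℝ)⁻¹ * ∑ i : Fin (n + 1), f (X i ω))) ℙ := by
    intro j
    refine Integrable.of_bound (hmeas j).aestronglyMeasurable (n + 1 : ℝ) ?_
    filter_upwards [hae] with ω hω
    have hle : f (X j ω) ≤ ∑ i : Fin (n + 1), f (X i ω) :=
      Finset.single_le_sum (f := fun i => f (X i ω)) (fun i _ => hf0 _) (Finset.mem_univ j)
    rw [Real.norm_of_nonneg (div_nonneg (hf0 _) (by positivity)), div_le_iff₀ (by positivity),
      ← mul_assoc, mul_inv_cancel₀ hn.ne', one_mul]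
    exact hle
  have heq : ∀ j, ∫ ω, f (X j ω) / ((n + 1 : ℝ)⁻¹ * ∑ i : Fin (n + 1), f (X i ω)) ∂ℙ
      = ∫ ω, f (X (Fin.last n) ω)
        / ((n + 1 : ℝ)⁻¹ * ∑ i : Fin (n + 1), f (X i ω)) ∂ℙ := by
    intro j
    have hG : Measurable fun x : Fin (n + 1) → 𝒳 => f (x (Fin.last n))
        / ((n + 1 : ℝ)⁻¹ * ∑ i : Fin (n + 1), f (x i)) :=
      (hf.comp (measurable_pi_apply _)).div
        ((Finset.measurable_sum _ fun i _ => hf.comp (measurable_pi_apply i)).const_mul _)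
    have h := hexch (Equiv.swap (Fin.last n) j)
    have h1 := integral_map (μ := (ℙ : Measure Ω))
      (measurable_pi_lambda _ fun i => hX i).aemeasurable hG.aestronglyMeasurable
    have h2 := integral_map (μ := (ℙ : Measure Ω))
      (measurable_pi_lambda (fun ω => fun i => X (Equiv.swap (Fin.last n) j i) ω)
        fun i => hX _).aemeasurable hG.aestronglyMeasurable
    rw [h] at h2
    refine Eq.trans ?_ (h2.symm.trans h1)
    refine integral_congr_ae (Filter.Eventually.of_forall fun ω => ?_)
    simp only [Equiv.swap_apply_left]
    rw [Equiv.sum_comp (Equiv.swap (Fin.last n) j) (fun i => f (X i ω))]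
  have hsum : ∫ ω, ∑ j : Fin (n + 1), f (X j ω)
      / ((n + 1 : ℝ)⁻¹ * ∑ i : Fin (n + 1), f (X i ω)) ∂ℙ = (n + 1 : ℝ) := by
    have : ∫ ω, ∑ j : Fin (n + 1), f (X j ω)
      / ((n + 1 : ℝ)⁻¹ * ∑ i : Fin (n + 1), f (X i ω)) ∂(ℙ : Measure Ω)
        = ∫ _, (n + 1 : ℝ) ∂(ℙ : Measure Ω) := by
      refine integral_congr_ae ?_
      filter_upwards [hae] with ω hω
      rw [← Finset.sum_div]
      field_simp
    rw [this]
    simp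
  rw [integral_finset_sum _ fun j _ => hint j, Finset.sum_congr rfl fun j _ => heq j] at hsum
  simp only [Finset.sum_const, Finset.card_univ, Fintype.card_fin, nsmul_eq_mul] at hsum
  push_cast at hsum
  exact mul_left_cancel₀ hn.ne' (hsum.trans (mul_one _).symm)
end

section
/- Let X = (X_1, ..., X_{n+1}) be an exchangeable sequence of 𝒳-valued random variables and let s : 𝒳^{n+1} → (0, ∞) be a measurable positive function. For a permutation π of {1, ..., n+1}, write X_π = (X_{π(1)}, ..., X_{π(n+1)}). Then E[ s(X) / Σ_π s(X_π) ] = 1/(n+1)!, where the sum in the denominator ranges over all (n+1)! permutations π of {1, ..., n+1}. -/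
open MeasureTheory ProbabilityTheory

/-- **Permutation-normalized statistics are exact e-variables for exchangeability (up to the
factor `(n+1)!`).** Let `X = (X 1, ..., X (n+1))` be an exchangeable sequence of `𝒳`-valued
random variables and let `s : 𝒳^{n+1} → (0,∞)` be a measurable positive function. Writing
`X_π = (X_{π 1}, ..., X_{π (n+1)})` for a permutation `π` of `{1, ..., n+1}`, we have
`E[ s(X) / Σ_π s(X_π) ] = 1/(n+1)!`, the sum ranging over all `(n+1)!` permutations. -/
theorem permutation_e_variable_expectation
    {Ω 𝒳 : Type*} [MeasureSpace Ω] [IsProbabilityMeasure (ℙ : Measure Ω)]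
    [MeasurableSpace 𝒳]
    (n : ℕ) (X : Fin (n + 1) → Ω → 𝒳) (hX : ∀ i, Measurable (X i))
    (hexch : ∀ π : Equiv.Perm (Fin (n + 1)),
      Measure.map (fun ω => fun i => X (π i) ω) ℙ
        = Measure.map (fun ω => fun i => X i ω) ℙ)
    (s : (Fin (n + 1) → 𝒳) → ℝ) (hs : Measurable s)
    (hspos : ∀ x, 0 < s x) :
    ∫ ω, s (fun i => X i ω)
        / (∑ π : Equiv.Perm (Fin (n + 1)), s (fun i => X (π i) ω)) ∂ℙ
      = 1 / (Nat.factorial (n + 1) : ℝ) := by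
  have hT : ∀ π : Equiv.Perm (Fin (n + 1)),
      Measurable (fun x : Fin (n + 1) → 𝒳 => fun i => x (π i)) := fun π =>
    measurable_pi_lambda _ fun i => measurable_pi_apply _
  have hXm : ∀ π : Equiv.Perm (Fin (n + 1)), Measurable (fun ω => fun i => X (π i) ω) := fun π =>
    measurable_pi_lambda _ fun i => hX _
  have hXm1 : Measurable (fun ω => fun i => X i ω) := measurable_pi_lambda _ fun i => hX _
  let D : (Fin (n + 1) → 𝒳) → ℝ := fun x => ∑ π : Equiv.Perm (Fin (n + 1)), s (fun i => x (π i))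
  have hDm : Measurable D := Finset.measurable_sum _ fun π _ => hs.comp (hT π)
  have hDpos : ∀ x, 0 < D x := fun x =>
    Finset.sum_pos (fun π _ => hspos _) Finset.univ_nonempty
  have hDinv : ∀ (σ : Equiv.Perm (Fin (n + 1))) x, D (fun i => x (σ i)) = D x := fun σ x =>
    Fintype.sum_equiv (Equiv.mulLeft σ) _ _ fun π => rfl
  have hgm : Measurable (fun x => s x / D x) := hs.div hDm
  have key : ∀ σ : Equiv.Perm (Fin (n + 1)),
      ∫ ω, s (fun i => X (σ i) ω) / D (fun i => X i ω) ∂ℙ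
        = ∫ ω, s (fun i => X i ω) / D (fun i => X i ω) ∂ℙ := by
    intro σ
    have h1 := integral_map (μ := (ℙ : Measure Ω)) (hXm σ).aemeasurable
      hgm.aestronglyMeasurable
    have h2 := integral_map (μ := (ℙ : Measure Ω)) hXm1.aemeasurable
      hgm.aestronglyMeasurable
    rw [hexch σ, h2] at h1
    rw [h1]
    refine integral_congr_ae (Filter.Eventually.of_forall fun ω => ?_)
    have := hDinv σ (fun i => X i ω)
    simp only at this ⊢
    rw [this]
  have hint : ∀ σ : Equiv.Perm (Fin (n + 1)),
      Integrable (fun ω => s (fun i => X (σ i) ω) / D (fun i => X i ω)) ℙ := by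
    intro σ
    refine Integrable.of_bound
      ((hs.comp (hXm σ)).div (hDm.comp hXm1)).aestronglyMeasurable 1
      (Filter.Eventually.of_forall fun ω => ?_)
    rw [Real.norm_of_nonneg (div_pos (hspos (fun i => X (σ i) ω)) (hDpos (fun i => X i ω))).le,
      div_le_one (hDpos (fun i => X i ω))]
    exact Finset.single_le_sum
      (f := fun π : Equiv.Perm (Fin (n + 1)) => s (fun i => X (π i) ω))
      (fun π _ => (hspos _).le) (Finset.mem_univ σ)
  have hsum : ∑ σ : Equiv.Perm (Fin (n + 1)),
      ∫ ω, s (fun i => X (σ i) ω) / D (fun i => X i ω) ∂ℙ = 1 := by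
    rw [← integral_finsetSum _ fun σ _ => hint σ]
    have : ∀ ω, ∑ σ : Equiv.Perm (Fin (n + 1)),
        s (fun i => X (σ i) ω) / D (fun i => X i ω) = 1 := by
      intro ω
      rw [← Finset.sum_div]
      exact div_self (hDpos (fun i => X i ω)).ne'
    simp [this]
  rw [Finset.sum_congr rfl fun σ _ => key σ, Finset.sum_const, Finset.card_univ,
    Fintype.card_perm, Fintype.card_fin, nsmul_eq_mul] at hsum
  rw [eq_div_iff (by positivity), mul_comm]
  exact hsum
end
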